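/- (Lemma 3.3, isentropic Euler case.) Let (ρ,u) be a classical solution of the isentropic compressible Euler equations on ℝⁿ × [0,T] satisfying the decay and integrability conditions, with M(0) > 0. If 1 < γ ≤ 1 + 2/n, then for all t ∈ [0,T]: (‖ℙ(0)‖²/(2M(0))) t² + F(0) t + G(0) ≤ G(t) ≤ IE(0) t² + F(0) t + G(0). If γ > 1 + 2/n, then for all t ∈ [0,T]: (‖ℙ(0)‖²/(2M(0))) t² + F(0) t + G(0) ≤ G(t) ≤ (n(γ−1)/2) IE(0) t² + F(0) t + G(0). -/

import Mathlib

open MeasureTheory Filter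
open scoped InnerProductSpace

noncomputable section

/-- A classical solution of the isentropic compressible Euler equations
`∂ₜρ + div(ρu) = 0`, `∂ₜ(ρuᵢ) + div(ρuᵢu) + ∂ᵢ(ρ^γ) = 0` on `ℝⁿ × [0,T]`,
together with the decay conditions (9-25), the integrability conditions on the
physical quantities, and differentiability of these quantities with derivatives
computed by differentiating under the integral sign. -/
structure IsentropicEulerSolution (n : ℕ) (γ T : ℝ) where
  ρ : ℝ → EuclideanSpace ℝ (Fin n) → ℝ
  u : ℝ → EuclideanSpace ℝ (Fin n) → EuclideanSpace ℝ (Fin n)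
  ρ_nonneg : ∀ t ∈ Set.Icc 0 T, ∀ x, 0 ≤ ρ t x
  /-- `ρ` is `C¹` on `[0,T] × ℝⁿ`. -/
  smooth_ρ : ContDiffOn ℝ 1 (fun p : ℝ × EuclideanSpace ℝ (Fin n) => ρ p.1 p.2)
    (Set.Icc 0 T ×ˢ Set.univ)
  /-- `u` is `C¹` on `[0,T] × ℝⁿ`. -/
  smooth_u : ContDiffOn ℝ 1 (fun p : ℝ × EuclideanSpace ℝ (Fin n) => u p.1 p.2)
    (Set.Icc 0 T ×ˢ Set.univ)
  /-- Conservation of mass: `∂ₜρ + div(ρu) = 0`. -/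
  mass_eq : ∀ t ∈ Set.Icc 0 T, ∀ x,
    deriv (fun τ => ρ τ x) t
      + ∑ i : Fin n, fderiv ℝ (fun y => ρ t y * u t y i) x (EuclideanSpace.single i 1) = 0
  /-- Conservation of momentum: `∂ₜ(ρuᵢ) + div(ρuᵢu) + ∂ᵢ(ρ^γ) = 0`. -/
  momentum_eq : ∀ t ∈ Set.Icc 0 T, ∀ x, ∀ i : Fin n,
    deriv (fun τ => ρ τ x * u τ x i) t
      + ∑ j : Fin n, fderiv ℝ (fun y => ρ t y * u t y i * u t y j) x (EuclideanSpace.single j 1)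
      + fderiv ℝ (fun y => ρ t y ^ γ) x (EuclideanSpace.single i 1) = 0
  /-- decay: `|u| → 0` as `|x| → ∞`. -/
  decay_u : ∀ t ∈ Set.Icc 0 T,
    Tendsto (fun x => ‖u t x‖) (Bornology.cobounded _) (nhds 0)
  /-- decay: `ρ|u| = o(|x|^{-(n+1)})`. -/
  decay_ρu : ∀ t ∈ Set.Icc 0 T,
    Tendsto (fun x => ‖x‖ ^ (n + 1) * (ρ t x * ‖u t x‖)) (Bornology.cobounded _) (nhds 0)
  /-- decay: `|∇ₓu| = o(|x|^{-n})`. -/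
  decay_gradu : ∀ t ∈ Set.Icc 0 T,
    Tendsto (fun x => ‖x‖ ^ n * ‖fderiv ℝ (u t) x‖) (Bornology.cobounded _) (nhds 0)
  /-- decay: the pressure `ρ^γ = o(|x|^{-n})`. -/
  decay_p : ∀ t ∈ Set.Icc 0 T,
    Tendsto (fun x => ‖x‖ ^ n * ρ t x ^ γ) (Bornology.cobounded _) (nhds 0)
  int_ρ : ∀ t ∈ Set.Icc 0 T, Integrable (ρ t)
  int_ρu : ∀ t ∈ Set.Icc 0 T, Integrable (fun x => ρ t x * ‖u t x‖)
  int_ρu2 : ∀ t ∈ Set.Icc 0 T, Integrable (fun x => ρ t x * ‖u t x‖ ^ 2)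
  int_ρx2 : ∀ t ∈ Set.Icc 0 T, Integrable (fun x => ρ t x * ‖x‖ ^ 2)
  int_ρux : ∀ t ∈ Set.Icc 0 T, Integrable (fun x => ρ t x * ‖u t x‖ * ‖x‖)
  int_ργ : ∀ t ∈ Set.Icc 0 T, Integrable (fun x => ρ t x ^ γ)
  /-- `M(t) = ∫ρ` is differentiable, by differentiation under the integral sign. -/
  hM : ∀ t ∈ Set.Icc 0 T,
    HasDerivAt (fun τ => ∫ x, ρ τ x) (∫ x, deriv (fun τ => ρ τ x) t) t
  /-- `ℙ(t) = ∫ρu` is differentiable, by differentiation under the integral sign. -/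
  hP : ∀ t ∈ Set.Icc 0 T,
    HasDerivAt (fun τ => ∫ x, ρ τ x • u τ x) (∫ x, deriv (fun τ => ρ τ x • u τ x) t) t
  /-- `F(t) = ∫ρ u·x` is differentiable, by differentiation under the integral sign. -/
  hF : ∀ t ∈ Set.Icc 0 T,
    HasDerivAt (fun τ => ∫ x, ρ τ x * ⟪u τ x, x⟫_ℝ)
      (∫ x, deriv (fun τ => ρ τ x * ⟪u τ x, x⟫_ℝ) t) t
  /-- `G(t) = (1/2)∫ρ|x|²` is differentiable, by differentiation under the integral sign. -/
  hG : ∀ t ∈ Set.Icc 0 T,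
    HasDerivAt (fun τ => (1 / 2 : ℝ) * ∫ x, ρ τ x * ‖x‖ ^ 2)
      ((1 / 2 : ℝ) * ∫ x, deriv (fun τ => ρ τ x * ‖x‖ ^ 2) t) t
  /-- `IE(t) = E_k(t) + I(t)` is differentiable, by differentiation under the integral
  sign. -/
  hIE : ∀ t ∈ Set.Icc 0 T,
    HasDerivAt (fun τ => ∫ x, ((1 / 2 : ℝ) * ρ τ x * ‖u τ x‖ ^ 2 + ρ τ x ^ γ / (γ - 1)))
      (∫ x, deriv (fun τ => (1 / 2 : ℝ) * ρ τ x * ‖u τ x‖ ^ 2 + ρ τ x ^ γ / (γ - 1)) t) t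

namespace IsentropicEulerSolution

variable {n : ℕ} {γ T : ℝ}

/-- The mass `M(t) = ∫ ρ dx`. -/
def M (S : IsentropicEulerSolution n γ T) (t : ℝ) : ℝ := ∫ x, S.ρ t x

/-- The momentum `ℙ(t) = ∫ ρ u dx`. -/
def P (S : IsentropicEulerSolution n γ T) (t : ℝ) : EuclideanSpace ℝ (Fin n) :=
  ∫ x, S.ρ t x • S.u t x

/-- The momentum weight `F(t) = ∫ ρ u·x dx`. -/
def F (S : IsentropicEulerSolution n γ T) (t : ℝ) : ℝ := ∫ x, S.ρ t x * ⟪S.u t x, x⟫_ℝ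

/-- The momentum of inertia `G(t) = (1/2) ∫ ρ |x|² dx`. -/
def G (S : IsentropicEulerSolution n γ T) (t : ℝ) : ℝ := (1 / 2 : ℝ) * ∫ x, S.ρ t x * ‖x‖ ^ 2

/-- The kinetic energy `E_k(t) = (1/2) ∫ ρ |u|² dx`. -/
def Ek (S : IsentropicEulerSolution n γ T) (t : ℝ) : ℝ :=
  (1 / 2 : ℝ) * ∫ x, S.ρ t x * ‖S.u t x‖ ^ 2

/-- The potential energy `I(t) = (1/(γ−1)) ∫ ρ^γ dx`. -/
def I (S : IsentropicEulerSolution n γ T) (t : ℝ) : ℝ := (1 / (γ - 1)) * ∫ x, S.ρ t x ^ γ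

/-- The energy `IE(t) = E_k(t) + I(t)`. -/
def IE (S : IsentropicEulerSolution n γ T) (t : ℝ) : ℝ := S.Ek t + S.I t

/-- The functional `IJ(t) = G(t) − (t+1)F(t) + (t+1)² IE(t)`. -/
def IJ (S : IsentropicEulerSolution n γ T) (t : ℝ) : ℝ :=
  S.G t - (t + 1) * S.F t + (t + 1) ^ 2 * S.IE t

end IsentropicEulerSolution

/-! The moment of inertia satisfies `G' = F` and `F' = 2 E_k + n (γ - 1) I`. Mass, momentum and the
energy `E_k + I` are conserved, so Cauchy–Schwarz bounds `F'` below by `‖ℙ(0)‖² / M(0)`, while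
`2 ≤ c` and `n (γ - 1) ≤ c` bound it above by `c IE(0)`; integrating twice gives the claim.

Nothing makes the time derivatives of `ρ |x|²` and `ρ u · x` integrable in space, and where they are
not, the Bochner integrals in the hypotheses on `G'` and `F'` are `0` by convention. Both laws are
therefore proved in integrated form: test the conservation laws with a cutoff times the weight
`½ |x|²` or `xᵢ`, and remove the cutoff by dominated convergence, first in space and then in time,
where conservation of energy and the continuity of `G` supply bounds uniform in time. -/

section

variable {E : Type*} [NormedAddCommGroup E] [NormedSpace ℝ E]

/-- `F` is a primitive of `f` on `[0,T]` in integrated form, `F t - F 0 = ∫₀ᵗ f`. It replaces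
the pointwise law `F' = f` where `f` is only known to be bounded and measurable. -/
structure IsPrimitiveOn (F f : ℝ → E) (T : ℝ) : Prop where
  intervalIntegrable : ∀ t ∈ Set.Icc 0 T, IntervalIntegrable f volume 0 t
  integral_eq : ∀ t ∈ Set.Icc 0 T, ∫ τ in (0 : ℝ)..t, f τ = F t - F 0

theorem zero_mem_Icc_of_mem {T t : ℝ} (ht : t ∈ Set.Icc 0 T) : (0 : ℝ) ∈ Set.Icc 0 T :=
  Set.left_mem_Icc.2 (ht.1.trans ht.2)

theorem uIcc_zero_subset_Icc {T t : ℝ} (ht : t ∈ Set.Icc 0 T) : Set.uIcc 0 t ⊆ Set.Icc 0 T :=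
  Set.uIcc_subset_Icc (zero_mem_Icc_of_mem ht) ht

namespace IsPrimitiveOn

variable {F f : ℝ → E} {T : ℝ}

theorem of_hasDerivAt [CompleteSpace E] (hF : ContinuousOn F (Set.Icc 0 T))
    (hf : ContinuousOn f (Set.Icc 0 T)) (hderiv : ∀ t ∈ Set.Ioo 0 T, HasDerivAt F (f t) t) :
    IsPrimitiveOn F f T := by
  have hint : ∀ t ∈ Set.Icc 0 T, IntervalIntegrable f volume 0 t := fun t ht =>
    (hf.mono (uIcc_zero_subset_Icc ht)).intervalIntegrable
  refine ⟨hint, fun t ht => ?_⟩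
  exact intervalIntegral.integral_eq_sub_of_hasDerivAt_of_le ht.1
    (hF.mono (Set.Icc_subset_Icc_right ht.2))
    (fun τ hτ => hderiv τ ⟨hτ.1, hτ.2.trans_le ht.2⟩) (hint t ht)

theorem congr (h : IsPrimitiveOn F f T) {F' f' : ℝ → E} (hF : Set.EqOn F F' (Set.Icc 0 T))
    (hf : Set.EqOn f f' (Set.Icc 0 T)) : IsPrimitiveOn F' f' T where
  intervalIntegrable t ht := (h.intervalIntegrable t ht).congr fun _ hτ =>
    hf (uIcc_zero_subset_Icc ht (Set.uIoc_subset_uIcc hτ))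
  integral_eq t ht := by
    rw [← hF ht, ← hF (zero_mem_Icc_of_mem ht), ← h.integral_eq t ht]
    exact intervalIntegral.integral_congr fun τ hτ => (hf (uIcc_zero_subset_Icc ht hτ)).symm

theorem sum {ι : Type*} {s : Finset ι} {F f : ι → ℝ → E}
    (h : ∀ i ∈ s, IsPrimitiveOn (F i) (f i) T) :
    IsPrimitiveOn (fun t => ∑ i ∈ s, F i t) (fun t => ∑ i ∈ s, f i t) T where
  intervalIntegrable t ht := by
    simpa only [Finset.sum_fn] using
      IntervalIntegrable.sum s fun i hi => (h i hi).intervalIntegrable t ht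
  integral_eq t ht := by
    rw [intervalIntegral.integral_finsetSum fun i hi => (h i hi).intervalIntegrable t ht,
      ← Finset.sum_sub_distrib]
    exact Finset.sum_congr rfl fun i hi => (h i hi).integral_eq t ht

theorem eq_apply_zero (h : IsPrimitiveOn F 0 T) {t : ℝ} (ht : t ∈ Set.Icc 0 T) : F t = F 0 :=
  sub_eq_zero.1 (by simpa using (h.integral_eq t ht).symm)

theorem of_tendsto {Fk fk : ℕ → ℝ → E} {K : ℝ} (h : ∀ k, IsPrimitiveOn (Fk k) (fk k) T)
    (hK : ∀ k, ∀ t ∈ Set.Icc 0 T, ‖fk k t‖ ≤ K)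
    (hF : ∀ t ∈ Set.Icc 0 T, Tendsto (fun k => Fk k t) atTop (nhds (F t)))
    (hf : ∀ t ∈ Set.Icc 0 T, Tendsto (fun k => fk k t) atTop (nhds (f t))) :
    IsPrimitiveOn F f T := by
  have hmem {t : ℝ} (ht : t ∈ Set.Icc 0 T) : ∀ τ ∈ Set.uIoc 0 t, τ ∈ Set.Icc 0 T :=
    fun _ hτ => uIcc_zero_subset_Icc ht (Set.uIoc_subset_uIcc hτ)
  have hmeas {t : ℝ} (ht : t ∈ Set.Icc 0 T) (k : ℕ) :
      AEStronglyMeasurable (fk k) (volume.restrict (Set.uIoc 0 t)) :=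
    (intervalIntegrable_iff.1 ((h k).intervalIntegrable t ht)).aestronglyMeasurable
  refine ⟨fun t ht => ?_, fun t ht => ?_⟩
  · refine intervalIntegrable_const.mono_fun' (g := fun _ => K)
      (aestronglyMeasurable_of_tendsto_ae atTop (hmeas ht) ?_) ?_
    all_goals refine (ae_restrict_iff' measurableSet_uIoc).2 (ae_of_all _ fun τ hτ => ?_)
    · exact hf τ (hmem ht τ hτ)
    · exact le_of_tendsto (hf τ (hmem ht τ hτ)).norm
        (Eventually.of_forall fun k => hK k τ (hmem ht τ hτ))
  · have hlim : Tendsto (fun k => ∫ τ in (0 : ℝ)..t, fk k τ) atTop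
        (nhds (∫ τ in (0 : ℝ)..t, f τ)) :=
      intervalIntegral.tendsto_integral_filter_of_dominated_convergence (fun _ => K)
        (Eventually.of_forall (hmeas ht))
        (Eventually.of_forall fun k => ae_of_all _ fun τ hτ => hK k τ (hmem ht τ hτ))
        intervalIntegrable_const (ae_of_all _ fun τ hτ => hf τ (hmem ht τ hτ))
    refine tendsto_nhds_unique hlim ?_
    simpa only [(h _).integral_eq t ht] using (hF t ht).sub (hF 0 (zero_mem_Icc_of_mem ht))

theorem sub_le_sub_of_le {F₁ F₂ f₁ f₂ : ℝ → ℝ} (h₁ : IsPrimitiveOn F₁ f₁ T)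
    (h₂ : IsPrimitiveOn F₂ f₂ T) (hle : ∀ t ∈ Set.Icc 0 T, f₁ t ≤ f₂ t) {t : ℝ}
    (ht : t ∈ Set.Icc 0 T) : F₁ t - F₁ 0 ≤ F₂ t - F₂ 0 := by
  rw [← h₁.integral_eq t ht, ← h₂.integral_eq t ht]
  exact intervalIntegral.integral_mono_on ht.1 (h₁.intervalIntegrable t ht)
    (h₂.intervalIntegrable t ht) fun τ hτ => hle τ ⟨hτ.1, hτ.2.trans ht.2⟩

theorem affine (a b T : ℝ) : IsPrimitiveOn (fun t => a + b * t) (fun _ => b) T :=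
  of_hasDerivAt (by fun_prop) (by fun_prop) fun t _ => by
    simpa using ((hasDerivAt_id t).const_mul b).const_add a

theorem quadratic (a b T : ℝ) :
    IsPrimitiveOn (fun t => b / 2 * t ^ 2 + a * t) (fun t => a + b * t) T :=
  of_hasDerivAt (by fun_prop) (by fun_prop) fun t _ =>
    (((hasDerivAt_pow 2 t).const_mul (b / 2)).fun_add
      ((hasDerivAt_id' t).const_mul a)).congr_deriv (by push_cast; ring)

variable {g g' g'' : ℝ → ℝ}

theorem quadratic_le_of_const_le (hg : IsPrimitiveOn g g' T) (hg' : IsPrimitiveOn g' g'' T) {b : ℝ}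
    (hb : ∀ t ∈ Set.Icc 0 T, b ≤ g'' t) {t : ℝ} (ht : t ∈ Set.Icc 0 T) :
    b / 2 * t ^ 2 + g' 0 * t + g 0 ≤ g t := by
  have hlin : ∀ s ∈ Set.Icc 0 T, g' 0 + b * s ≤ g' s := fun s hs => by
    have := (affine (g' 0) b T).sub_le_sub_of_le hg' hb hs
    linarith
  have := (quadratic (g' 0) b T).sub_le_sub_of_le hg hlin ht
  linarith

theorem le_quadratic_of_le_const (hg : IsPrimitiveOn g g' T) (hg' : IsPrimitiveOn g' g'' T) {b : ℝ}
    (hb : ∀ t ∈ Set.Icc 0 T, g'' t ≤ b) {t : ℝ} (ht : t ∈ Set.Icc 0 T) :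
    g t ≤ b / 2 * t ^ 2 + g' 0 * t + g 0 := by
  have hlin : ∀ s ∈ Set.Icc 0 T, g' s ≤ g' 0 + b * s := fun s hs => by
    have := hg'.sub_le_sub_of_le (affine (g' 0) b T) hb hs
    linarith
  have := hg.sub_le_sub_of_le (quadratic (g' 0) b T) hlin ht
  linarith

end IsPrimitiveOn

/-! ### Functions of time and space that are `C¹` -/

section TimeDependent

variable {F : Type*} [NormedAddCommGroup F] [NormedSpace ℝ F] {s : Set ℝ} {q : ℝ → E → F} {t : ℝ}

theorem contDiff_slice (hq : ContDiffOn ℝ 1 (fun p : ℝ × E => q p.1 p.2) (s ×ˢ Set.univ))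
    (ht : t ∈ s) : ContDiff ℝ 1 (q t) := by
  rw [← contDiffOn_univ]
  exact hq.comp (contDiff_prodMk_right t).contDiffOn fun x _ => ⟨ht, Set.mem_univ x⟩

theorem hasDerivAt_slice (hq : ContDiffOn ℝ 1 (fun p : ℝ × E => q p.1 p.2) (s ×ˢ Set.univ))
    (hs : s ∈ nhds t) (x : E) :
    HasDerivAt (fun τ => q τ x) (fderiv ℝ (fun p : ℝ × E => q p.1 p.2) (t, x) (1, 0)) t := by
  have hq' : DifferentiableAt ℝ (fun p : ℝ × E => q p.1 p.2) (t, x) :=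
    (hq.contDiffAt (prod_mem_nhds hs univ_mem)).differentiableAt one_ne_zero
  exact hq'.hasFDerivAt.comp_hasDerivAt t ((hasDerivAt_id t).prodMk (hasDerivAt_const t x))

theorem continuousOn_deriv_slice (hs : IsOpen s)
    (hq : ContDiffOn ℝ 1 (fun p : ℝ × E => q p.1 p.2) (s ×ˢ Set.univ)) :
    ContinuousOn (fun p : ℝ × E => deriv (fun τ => q τ p.2) p.1) (s ×ˢ Set.univ) :=
  ((hq.continuousOn_fderiv_of_isOpen (hs.prod isOpen_univ) le_rfl).clm_apply
    continuousOn_const).congr fun p hp => (hasDerivAt_slice hq (hs.mem_nhds hp.1) p.2).deriv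

variable [MeasurableSpace E] [OpensMeasurableSpace E] [SecondCountableTopologyEither E F]
  {μ : Measure E} [IsFiniteMeasureOnCompacts μ]

theorem hasDerivAt_integral_smul_of_hasCompactSupport {φ : E → ℝ}
    (hφ : Continuous φ) (hc : HasCompactSupport φ) (hs : IsOpen s)
    (hq : ContDiffOn ℝ 1 (fun p : ℝ × E => q p.1 p.2) (s ×ˢ Set.univ)) (ht : t ∈ s) :
    HasDerivAt (fun τ => ∫ x, φ x • q τ x ∂μ)
      (∫ x, φ x • deriv (fun τ => q τ x) t ∂μ) t := by
  obtain ⟨δ, hδ, hball⟩ := Metric.nhds_basis_closedBall.mem_iff.1 (hs.mem_nhds ht)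
  have hderiv := continuousOn_deriv_slice hs hq
  obtain ⟨K, hK⟩ := ((isCompact_closedBall t δ).prod hc.isCompact).exists_bound_of_continuousOn
    (hderiv.mono (Set.prod_mono hball (Set.subset_univ _)))
  have hcont : ∀ τ ∈ s, Continuous fun x => φ x • q τ x := fun τ hτ =>
    hφ.smul (contDiff_slice hq hτ).continuous
  refine (hasDerivAt_integral_of_dominated_loc_of_deriv_le
    (F' := fun τ x => φ x • deriv (fun τ => q τ x) τ) (bound := fun x => K * ‖φ x‖)
    (Metric.closedBall_mem_nhds t hδ) ?_ ?_ ?_ ?_ ?_ ?_).2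
  · filter_upwards [hs.mem_nhds ht] with τ hτ using (hcont τ hτ).aestronglyMeasurable
  · exact (hcont t ht).integrable_of_hasCompactSupport hc.smul_right
  · exact (hφ.smul (hderiv.comp_continuous (f := fun x => (t, x)) (by fun_prop)
      fun x => ⟨ht, Set.mem_univ x⟩)).aestronglyMeasurable
  · refine ae_of_all _ fun x τ hτ => ?_
    rw [norm_smul, mul_comm]
    by_cases hx : x ∈ tsupport φ
    · gcongr
      exact hK (τ, x) ⟨hτ, hx⟩
    · simp [image_eq_zero_of_notMem_tsupport hx]
  · exact (hφ.integrable_of_hasCompactSupport hc).norm.const_mul K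
  · exact ae_of_all _ fun x τ hτ =>
      (hasDerivAt_slice hq (hs.mem_nhds (hball hτ)) x).differentiableAt.hasDerivAt.const_smul (φ x)

end TimeDependent

/-! ### Divergence, cutoff functions and weights -/

/-- The divergence of a vector field, as the trace of its Fréchet derivative. -/
def divergence (V : E → E) (x : E) : ℝ :=
  LinearMap.trace ℝ E (fderiv ℝ V x)

theorem divergence_eq_sum_basis {ι : Type*} [Fintype ι] (b : Module.Basis ι ℝ E) (V : E → E)
    (x : E) : divergence V x = ∑ i, b.coord i (fderiv ℝ V x (b i)) := by
  classical
  rw [divergence, LinearMap.trace_eq_matrix_trace ℝ b, Matrix.trace]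
  simp [LinearMap.toMatrix_apply]

theorem divergence_eq_sum_apply {n : ℕ}
    {V : EuclideanSpace ℝ (Fin n) → EuclideanSpace ℝ (Fin n)} {x : EuclideanSpace ℝ (Fin n)}
    (hV : DifferentiableAt ℝ V x) :
    divergence V x = ∑ i, fderiv ℝ (fun y => V y i) x (EuclideanSpace.single i 1) := by
  rw [divergence_eq_sum_basis (EuclideanSpace.basisFun (Fin n) ℝ).toBasis]
  refine Finset.sum_congr rfl fun i _ => ?_
  have hVi : HasFDerivAt (fun y => V y i) (EuclideanSpace.proj i ∘L fderiv ℝ V x) x :=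
    (EuclideanSpace.proj (𝕜 := ℝ) i).hasFDerivAt.comp x hV.hasFDerivAt
  simp [hVi.fderiv]

theorem divergence_add {V W : E → E} {x : E} (hV : DifferentiableAt ℝ V x)
    (hW : DifferentiableAt ℝ W x) :
    divergence (fun y => V y + W y) x = divergence V x + divergence W x := by
  simp [divergence, fderiv_fun_add hV hW]

theorem continuous_fderiv_apply {φ : E → ℝ} {V : E → E} (hφ : ContDiff ℝ 1 φ)
    (hV : Continuous V) : Continuous fun x => fderiv ℝ φ x (V x) :=
  (hφ.continuous_fderiv one_ne_zero).clm_apply hV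

/-- A sequence of `C¹` cutoff functions exhausting `E`, with gradients of size `C / (1 + ‖x‖)`. -/
structure IsCutoffSeq (χ : ℕ → E → ℝ) (C : ℝ) : Prop where
  contDiff : ∀ k, ContDiff ℝ 1 (χ k)
  hasCompactSupport : ∀ k, HasCompactSupport (χ k)
  abs_le_one : ∀ k x, |χ k x| ≤ 1
  eventuallyEq_one : ∀ x, ∀ᶠ k in atTop, χ k =ᶠ[nhds x] 1
  norm_fderiv_mul_le : ∀ k x, ‖fderiv ℝ (χ k) x‖ * (1 + ‖x‖) ≤ C

/-- A `C¹` function with gradient bounded by `a` and which itself grows at most like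
`a x * (1 + ‖x‖)`, so that multiplying it by a cutoff function costs only a constant factor in
the gradient bound. -/
structure IsWeight (φ a : E → ℝ) : Prop where
  contDiff : ContDiff ℝ 1 φ
  norm_fderiv_le : ∀ x, ‖fderiv ℝ φ x‖ ≤ a x
  abs_le : ∀ x, |φ x| ≤ a x * (1 + ‖x‖)

theorem hasFDerivAt_half_norm_sq {H : Type*} [NormedAddCommGroup H] [InnerProductSpace ℝ H]
    (x : H) : HasFDerivAt (fun y : H => 1 / 2 * ‖y‖ ^ 2) (innerSL ℝ x) x := by
  simpa [smul_smul, ← Nat.cast_smul_eq_nsmul ℝ] using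
    (hasStrictFDerivAt_norm_sq x).hasFDerivAt.const_mul (1 / 2 : ℝ)

namespace IsWeight

theorem one : IsWeight (fun _ : E => 1) fun _ => 1 where
  contDiff := contDiff_const
  norm_fderiv_le x := by simp
  abs_le x := by simp

theorem clm (L : E →L[ℝ] ℝ) : IsWeight L fun _ => ‖L‖ where
  contDiff := L.contDiff
  norm_fderiv_le x := by rw [L.fderiv]
  abs_le x := (L.le_opNorm x).trans (by gcongr; linarith)

theorem half_norm_sq {H : Type*} [NormedAddCommGroup H] [InnerProductSpace ℝ H] :
    IsWeight (fun x : H => 1 / 2 * ‖x‖ ^ 2) norm where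
  contDiff := contDiff_const.mul (contDiff_norm_sq ℝ)
  norm_fderiv_le x := by rw [(hasFDerivAt_half_norm_sq x).fderiv, innerSL_apply_norm]
  abs_le x := by
    rw [abs_of_nonneg (by positivity)]
    nlinarith [norm_nonneg x]

end IsWeight

namespace IsCutoffSeq

variable {χ : ℕ → E → ℝ} {C : ℝ} {φ a : E → ℝ}

theorem eventually_mul_eventuallyEq (hχ : IsCutoffSeq χ C) (f : E → ℝ) (x : E) :
    ∀ᶠ k in atTop, (fun y => χ k y * f y) =ᶠ[nhds x] f := by
  filter_upwards [hχ.eventuallyEq_one x] with k hk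
  filter_upwards [hk] with y hy
  rw [hy, Pi.one_apply, one_mul]

theorem norm_fderiv_mul_weight_le (hχ : IsCutoffSeq χ C) (hφ : IsWeight φ a) (k : ℕ) (x : E) :
    ‖fderiv ℝ (fun y => χ k y * φ y) x‖ ≤ (1 + C) * a x := by
  have ha : 0 ≤ a x := (norm_nonneg _).trans (hφ.norm_fderiv_le x)
  rw [fderiv_fun_mul ((hχ.contDiff k).differentiable one_ne_zero x)
    (hφ.contDiff.differentiable one_ne_zero x)]
  calc ‖χ k x • fderiv ℝ φ x + φ x • fderiv ℝ (χ k) x‖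
      ≤ |χ k x| * ‖fderiv ℝ φ x‖ + |φ x| * ‖fderiv ℝ (χ k) x‖ := by
        refine (norm_add_le _ _).trans_eq ?_
        rw [norm_smul, norm_smul, Real.norm_eq_abs, Real.norm_eq_abs]
    _ ≤ 1 * a x + a x * (1 + ‖x‖) * ‖fderiv ℝ (χ k) x‖ := by
        gcongr
        exacts [hχ.abs_le_one k x, hφ.norm_fderiv_le x, hφ.abs_le x]
    _ = a x + ‖fderiv ℝ (χ k) x‖ * (1 + ‖x‖) * a x := by ring
    _ ≤ a x + C * a x := by
        gcongr
        exact hχ.norm_fderiv_mul_le k x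
    _ = (1 + C) * a x := by ring

theorem norm_fderiv_mul_weight_apply_le (hχ : IsCutoffSeq χ C) (hφ : IsWeight φ a) (k : ℕ)
    (x v : E) : ‖fderiv ℝ (fun y => χ k y * φ y) x v‖ ≤ (1 + C) * (a x * ‖v‖) := by
  rw [← mul_assoc]
  exact ((fderiv ℝ _ x).le_opNorm v).trans (by gcongr; exact hχ.norm_fderiv_mul_weight_le hφ k x)

variable [MeasurableSpace E] [OpensMeasurableSpace E] {μ : Measure E}

theorem tendsto_integral_mul (hχ : IsCutoffSeq χ C) {f : E → ℝ} (hf : Integrable f μ) :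
    Tendsto (fun k => ∫ x, χ k x * f x ∂μ) atTop (nhds (∫ x, f x ∂μ)) := by
  refine tendsto_integral_of_dominated_convergence (fun x => ‖f x‖)
    (fun k => (hχ.contDiff k).continuous.aestronglyMeasurable.mul hf.1) hf.norm
    (fun k => ae_of_all _ fun x => ?_) (ae_of_all _ fun x => ?_)
  · rw [norm_mul]
    exact mul_le_of_le_one_left (norm_nonneg _) (hχ.abs_le_one k x)
  · exact tendsto_const_nhds.congr' <|
      (hχ.eventually_mul_eventuallyEq f x).mono fun k hk => hk.eq_of_nhds.symm

theorem tendsto_integral_fderiv_apply (hχ : IsCutoffSeq χ C) (hφ : IsWeight φ a) {V : E → E}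
    (hV : Continuous V) (haV : Integrable (fun x => a x * ‖V x‖) μ) :
    Tendsto (fun k => ∫ x, fderiv ℝ (fun y => χ k y * φ y) x (V x) ∂μ) atTop
      (nhds (∫ x, fderiv ℝ φ x (V x) ∂μ)) := by
  refine tendsto_integral_of_dominated_convergence (fun x => (1 + C) * (a x * ‖V x‖))
    (fun k => (continuous_fderiv_apply
      ((hχ.contDiff k).mul hφ.contDiff) hV).aestronglyMeasurable) (haV.const_mul _)
    (fun k => ae_of_all _ fun x => hχ.norm_fderiv_mul_weight_apply_le hφ k x (V x))
    (ae_of_all _ fun x => ?_)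
  refine tendsto_const_nhds.congr' <|
    (hχ.eventually_mul_eventuallyEq φ x).mono fun k hk => ?_
  simp only [hk.fderiv_eq]

end IsCutoffSeq

section FiniteDimensional

variable [FiniteDimensional ℝ E]

theorem divergence_smul {f : E → ℝ} {V : E → E} {x : E} (hf : DifferentiableAt ℝ f x)
    (hV : DifferentiableAt ℝ V x) :
    divergence (fun y => f y • V y) x = f x * divergence V x + fderiv ℝ f x (V x) := by
  simp [divergence, fderiv_fun_smul hf hV]

theorem divergence_smul_const {f : E → ℝ} {x : E} (hf : DifferentiableAt ℝ f x) (v : E) :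
    divergence (fun y => f y • v) x = fderiv ℝ f x v := by
  rw [divergence_smul hf (differentiableAt_const v)]
  simp [divergence]

theorem exists_isCutoffSeq : ∃ (χ : ℕ → E → ℝ) (C : ℝ), IsCutoffSeq χ C := by
  let ψ : ContDiffBump (0 : E) := ⟨1, 2, one_pos, one_lt_two⟩
  have hψ : ContDiff ℝ 1 ψ := ψ.contDiff
  obtain ⟨C, hC⟩ := ((ψ.hasCompactSupport.fderiv ℝ).norm.mul_right
    (f' := fun x => 1 + ‖x‖)).exists_bound_of_continuous
      ((hψ.continuous_fderiv one_ne_zero).norm.mul (continuous_const.add continuous_norm))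
  let ε (k : ℕ) : ℝ := ((k : ℝ) + 1)⁻¹
  have hε (k : ℕ) : 0 < ε k := by positivity
  have hε_le (k : ℕ) : ε k ≤ 1 := inv_le_one_of_one_le₀ (by linarith [k.cast_nonneg (α := ℝ)])
  refine ⟨fun k x => ψ (ε k • x), C, fun k => hψ.comp (contDiff_const_smul _),
    fun k => ψ.hasCompactSupport.comp_smul (hε k).ne',
    fun k x => abs_le.2 ⟨by linarith [ψ.nonneg (x := ε k • x)], ψ.le_one⟩, fun x => ?_,
    fun k x => ?_⟩
  · have hlim : Tendsto (fun k => ε k • x) atTop (nhds 0) := by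
      simpa [ε, one_div] using (tendsto_one_div_add_atTop_nhds_zero_nat (𝕜 := ℝ)).smul_const x
    filter_upwards [hlim.eventually (Metric.ball_mem_nhds 0 ψ.rIn_pos)] with k hk
    exact (continuous_const_smul _).continuousAt.eventually (ψ.eventuallyEq_one_of_mem_ball hk)
  · have hfderiv : fderiv ℝ (fun y => ψ (ε k • y)) x = ε k • fderiv ℝ ψ (ε k • x) := by
      simpa using fderiv_comp_smul (𝕜 := ℝ) (f := ψ) (ε k) (x := x)
    calc ‖fderiv ℝ (fun y => ψ (ε k • y)) x‖ * (1 + ‖x‖)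
        = ‖fderiv ℝ ψ (ε k • x)‖ * (ε k + ‖ε k • x‖) := by
          rw [hfderiv, norm_smul, norm_smul, Real.norm_of_nonneg (hε k).le]
          ring
      _ ≤ ‖fderiv ℝ ψ (ε k • x)‖ * (1 + ‖ε k • x‖) := by gcongr; exact hε_le k
      _ ≤ C := (le_abs_self _).trans (hC (ε k • x))

variable [MeasurableSpace E] [BorelSpace E] {μ : Measure E} [μ.IsAddHaarMeasure]

theorem integral_mul_divergence_of_hasCompactSupport {φ : E → ℝ} {V : E → E}
    (hφ : ContDiff ℝ 1 φ) (hc : HasCompactSupport φ) (hV : ContDiff ℝ 1 V) :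
    ∫ x, φ x * divergence V x ∂μ = -∫ x, fderiv ℝ φ x (V x) ∂μ := by
  let b := Module.finBasis ℝ E
  let c (i) : E →L[ℝ] ℝ := (b.coord i).toContinuousLinearMap
  have hVc (i) : ContDiff ℝ 1 fun x => c i (V x) := (c i).contDiff.comp hV
  have hfderiv (i) (x : E) : fderiv ℝ (fun y => c i (V y)) x (b i) = c i (fderiv ℝ V x (b i)) := by
    have hcV : HasFDerivAt (fun y => c i (V y)) (c i ∘L fderiv ℝ V x) x :=
      (c i).hasFDerivAt.comp x (hV.differentiable one_ne_zero x).hasFDerivAt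
    rw [hcV.fderiv, ContinuousLinearMap.comp_apply]
  have hdφ (i) : Integrable (fun x => fderiv ℝ φ x (b i) * c i (V x)) μ :=
    ((continuous_fderiv_apply hφ continuous_const).mul
      (hVc i).continuous).integrable_of_hasCompactSupport (hc.fderiv_apply ℝ _).mul_right
  have hdV (i) : Integrable (fun x => φ x * fderiv ℝ (fun y => c i (V y)) x (b i)) μ :=
    (hφ.continuous.mul
      (continuous_fderiv_apply (hVc i) continuous_const)).integrable_of_hasCompactSupport
        hc.mul_right
  have hparts (i) : ∫ x, φ x * fderiv ℝ (fun y => c i (V y)) x (b i) ∂μ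
      = -∫ x, fderiv ℝ φ x (b i) * c i (V x) ∂μ :=
    integral_mul_fderiv_eq_neg_fderiv_mul_of_integrable (hdφ i) (hdV i)
      ((hφ.continuous.mul (hVc i).continuous).integrable_of_hasCompactSupport hc.mul_right)
      (fun x _ => hφ.differentiable one_ne_zero x)
      (fun x _ => (hVc i).differentiable one_ne_zero x)
  have hsum (x : E) : fderiv ℝ φ x (V x) = ∑ i, fderiv ℝ φ x (b i) * c i (V x) := by
    conv_lhs => rw [← b.sum_repr (V x), map_sum]
    exact Finset.sum_congr rfl fun i _ => by rw [map_smul, smul_eq_mul, mul_comm]; rfl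
  have hdiv (x : E) : φ x * divergence V x
      = ∑ i, φ x * fderiv ℝ (fun y => c i (V y)) x (b i) := by
    simp only [divergence_eq_sum_basis b, Finset.mul_sum, hfderiv]
    rfl
  simp only [hdiv, hsum]
  rw [integral_finsetSum _ fun i _ => hdV i, integral_finsetSum _ fun i _ => hdφ i,
    ← Finset.sum_neg_distrib]
  exact Finset.sum_congr rfl fun i _ => hparts i

theorem integral_divergence_eq_zero {V : E → E} (hV : ContDiff ℝ 1 V) (hint : Integrable V μ)
    (hdiv : Integrable (divergence V) μ) : ∫ x, divergence V x ∂μ = 0 := by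
  obtain ⟨χ, C, hχ⟩ := exists_isCutoffSeq (E := E)
  have hflux : Tendsto (fun k => ∫ x, fderiv ℝ (χ k) x (V x) ∂μ) atTop (nhds 0) := by
    simpa using hχ.tendsto_integral_fderiv_apply IsWeight.one hV.continuous
      (by simpa using hint.norm)
  have hparts (k : ℕ) : ∫ x, χ k x * divergence V x ∂μ = -∫ x, fderiv ℝ (χ k) x (V x) ∂μ :=
    integral_mul_divergence_of_hasCompactSupport (hχ.contDiff k) (hχ.hasCompactSupport k) hV
  refine tendsto_nhds_unique (hχ.tendsto_integral_mul hdiv) ?_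
  simpa only [hparts, neg_zero] using hflux.neg

end FiniteDimensional

/-! ### Conservation laws -/

/-- The conservation law `∂ₜq + div V = 0` on `[0,T] × E`, for a `C¹` density `q` and a `C¹`
flux `V`. The equation is imposed at interior times only, where the time derivative of `q` is
determined by its values on `[0,T]`. -/
structure IsConservationLaw (q : ℝ → E → ℝ) (V : ℝ → E → E) (T : ℝ) : Prop where
  contDiffOn_density : ContDiffOn ℝ 1 (fun p : ℝ × E => q p.1 p.2) (Set.Icc 0 T ×ˢ Set.univ)
  contDiffOn_flux : ContDiffOn ℝ 1 (fun p : ℝ × E => V p.1 p.2) (Set.Icc 0 T ×ˢ Set.univ)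
  deriv_add_divergence :
    ∀ t ∈ Set.Ioo 0 T, ∀ x, deriv (fun τ => q τ x) t + divergence (V t) x = 0

namespace IsConservationLaw

variable {q : ℝ → E → ℝ} {V : ℝ → E → E} {T : ℝ} {φ a : E → ℝ}

theorem contDiff_flux (h : IsConservationLaw q V T) {t : ℝ} (ht : t ∈ Set.Icc 0 T) :
    ContDiff ℝ 1 (V t) :=
  contDiff_slice h.contDiffOn_flux ht

variable [FiniteDimensional ℝ E]

theorem deriv_mul_add_divergence_smul (h : IsConservationLaw q V T) {f : ℝ → E → ℝ} {t : ℝ}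
    (ht : t ∈ Set.Ioo 0 T) {x : E} (hft : DifferentiableAt ℝ (fun τ => f τ x) t)
    (hfx : DifferentiableAt ℝ (f t) x) :
    deriv (fun τ => q τ x * f τ x) t + divergence (fun y => f t y • V t y) x
      = q t x * deriv (fun τ => f τ x) t + fderiv ℝ (f t) x (V t x) := by
  have hqt := (hasDerivAt_slice h.contDiffOn_density (Icc_mem_nhds ht.1 ht.2) x).differentiableAt
  have hV := (h.contDiff_flux (Set.Ioo_subset_Icc_self ht)).differentiable one_ne_zero x
  rw [deriv_fun_mul hqt hft, divergence_smul hfx hV]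
  linear_combination f t x * h.deriv_add_divergence t ht x

variable [MeasurableSpace E] [BorelSpace E] {μ : Measure E} [μ.IsAddHaarMeasure]

theorem isPrimitiveOn_integral_mul_of_hasCompactSupport (h : IsConservationLaw q V T)
    (hφ : ContDiff ℝ 1 φ) (hc : HasCompactSupport φ) :
    IsPrimitiveOn (fun t => ∫ x, φ x * q t x ∂μ) (fun t => ∫ x, fderiv ℝ φ x (V t x) ∂μ) T := by
  refine .of_hasDerivAt ?_ ?_ fun t ht => ?_
  · refine continuousOn_integral_of_compact_support hc.isCompact
      ((hφ.continuous.comp continuous_snd).continuousOn.mul h.contDiffOn_density.continuousOn)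
      fun t x _ hx => ?_
    rw [image_eq_zero_of_notMem_tsupport hx, zero_mul]
  · refine continuousOn_integral_of_compact_support (hc.fderiv ℝ).isCompact
      ((((hφ.continuous_fderiv one_ne_zero).comp continuous_snd).continuousOn).clm_apply
        h.contDiffOn_flux.continuousOn) fun t x _ hx => ?_
    rw [image_eq_zero_of_notMem_tsupport hx, zero_apply]
  · refine (hasDerivAt_integral_smul_of_hasCompactSupport hφ.continuous hc isOpen_Ioo
      (h.contDiffOn_density.mono (Set.prod_mono_left Set.Ioo_subset_Icc_self)) ht).congr_deriv ?_
    have hlaw (x : E) : φ x • deriv (fun τ => q τ x) t = -(φ x * divergence (V t) x) := by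
      rw [eq_neg_of_add_eq_zero_left (h.deriv_add_divergence t ht x), smul_eq_mul, mul_neg]
    simp only [hlaw]
    rw [integral_neg, integral_mul_divergence_of_hasCompactSupport hφ hc
      (h.contDiff_flux (Set.Ioo_subset_Icc_self ht)), neg_neg]

theorem isPrimitiveOn_integral_mul (h : IsConservationLaw q V T) (hφ : IsWeight φ a)
    (hq : ∀ t ∈ Set.Icc 0 T, Integrable (fun x => φ x * q t x) μ)
    (hV : ∀ t ∈ Set.Icc 0 T, Integrable (fun x => a x * ‖V t x‖) μ) {K : ℝ}
    (hK : ∀ t ∈ Set.Icc 0 T, ∫ x, a x * ‖V t x‖ ∂μ ≤ K) :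
    IsPrimitiveOn (fun t => ∫ x, φ x * q t x ∂μ) (fun t => ∫ x, fderiv ℝ φ x (V t x) ∂μ) T := by
  obtain ⟨χ, C, hχ⟩ := exists_isCutoffSeq (E := E)
  have hC : 0 ≤ C := (by positivity : (0 : ℝ) ≤ _).trans (hχ.norm_fderiv_mul_le 0 0)
  refine IsPrimitiveOn.of_tendsto (K := (1 + C) * K)
    (fun k => h.isPrimitiveOn_integral_mul_of_hasCompactSupport
      ((hχ.contDiff k).mul hφ.contDiff) (hχ.hasCompactSupport k).mul_right)
    (fun k t ht => ?_) (fun t ht => ?_)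
    (fun t ht => hχ.tendsto_integral_fderiv_apply hφ (h.contDiff_flux ht).continuous (hV t ht))
  · refine (norm_integral_le_of_norm_le ((hV t ht).const_mul (1 + C)) (ae_of_all _ fun x =>
      hχ.norm_fderiv_mul_weight_apply_le hφ k x (V t x))).trans ?_
    rw [integral_const_mul]
    gcongr
    exact hK t ht
  · simpa only [mul_assoc] using hχ.tendsto_integral_mul (hq t ht)

theorem integral_eq_integral_zero_of_bounded (h : IsConservationLaw q V T)
    (hq : ∀ t ∈ Set.Icc 0 T, Integrable (q t) μ) (hV : ∀ t ∈ Set.Icc 0 T, Integrable (V t) μ)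
    {K : ℝ} (hK : ∀ t ∈ Set.Icc 0 T, ∫ x, ‖V t x‖ ∂μ ≤ K) {t : ℝ} (ht : t ∈ Set.Icc 0 T) :
    ∫ x, q t x ∂μ = ∫ x, q 0 x ∂μ := by
  have hprim := h.isPrimitiveOn_integral_mul (μ := μ) IsWeight.one (by simpa using hq)
    (fun τ hτ => by simpa using (hV τ hτ).norm) (by simpa using hK)
  simp only [one_mul, fderiv_fun_const, Pi.zero_apply, zero_apply, integral_zero] at hprim
  exact hprim.eq_apply_zero ht

theorem integral_deriv_eq_zero (h : IsConservationLaw q V T) {t : ℝ} (ht : t ∈ Set.Ioo 0 T)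
    (hV : Integrable (V t) μ) : ∫ x, deriv (fun τ => q τ x) t ∂μ = 0 := by
  simp only [eq_neg_of_add_eq_zero_left (h.deriv_add_divergence t ht _), integral_neg, neg_eq_zero]
  -- A non-integrable divergence has Bochner integral `0` by convention.
  by_cases hdiv : Integrable (divergence (V t)) μ
  · exact integral_divergence_eq_zero (h.contDiff_flux (Set.Ioo_subset_Icc_self ht)) hV hdiv
  · exact integral_undef hdiv

theorem integral_eq_integral_zero (h : IsConservationLaw q V T)
    (hderiv : ∀ t ∈ Set.Icc 0 T,
      HasDerivAt (fun τ => ∫ x, q τ x ∂μ) (∫ x, deriv (fun τ => q τ x) t ∂μ) t)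
    (hV : ∀ t ∈ Set.Icc 0 T, Integrable (V t) μ) {t : ℝ} (ht : t ∈ Set.Icc 0 T) :
    ∫ x, q t x ∂μ = ∫ x, q 0 x ∂μ :=
  (IsPrimitiveOn.of_hasDerivAt (f := 0)
    (fun τ hτ => (hderiv τ hτ).continuousAt.continuousWithinAt) continuousOn_const fun τ hτ =>
      (hderiv τ (Set.Ioo_subset_Icc_self hτ)).congr_deriv <|
        h.integral_deriv_eq_zero hτ (hV τ (Set.Ioo_subset_Icc_self hτ))).eq_apply_zero ht

end IsConservationLaw

end

theorem sq_integral_mul_le {α : Type*} [MeasurableSpace α] {μ : Measure α} {w f : α → ℝ}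
    (hw : ∀ x, 0 ≤ w x) (hw_int : Integrable w μ) (hwf : Integrable (fun x => w x * f x) μ)
    (hwf2 : Integrable (fun x => w x * f x ^ 2) μ) :
    (∫ x, w x * f x ∂μ) ^ 2 ≤ (∫ x, w x ∂μ) * ∫ x, w x * f x ^ 2 ∂μ := by
  have hquad (s : ℝ) : 0 ≤ (∫ x, w x ∂μ) * (s * s) + 2 * (∫ x, w x * f x ∂μ) * s
      + ∫ x, w x * f x ^ 2 ∂μ := by
    calc 0 ≤ ∫ x, w x * (s + f x) ^ 2 ∂μ :=
          integral_nonneg fun x => mul_nonneg (hw x) (sq_nonneg _)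
      _ = ∫ x, w x * (s * s) + (w x * f x * (2 * s) + w x * f x ^ 2) ∂μ := by
          congr 1 with x
          ring
      _ = _ := by
          rw [integral_add (g := fun x => w x * f x * (2 * s) + w x * f x ^ 2)
            (hw_int.mul_const _) ((hwf.mul_const _).add hwf2), integral_add (hwf.mul_const _) hwf2,
            integral_mul_const, integral_mul_const]
          ring
  have := discrim_le_zero hquad
  rw [discrim] at this
  linarith

/-! ### The Euler equations -/

namespace IsentropicEulerSolution

variable {n : ℕ} {γ T : ℝ} (S : IsentropicEulerSolution n γ T) {t : ℝ}

theorem contDiff_ρ (ht : t ∈ Set.Icc 0 T) : ContDiff ℝ 1 (S.ρ t) :=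
  contDiff_slice S.smooth_ρ ht

theorem contDiff_u (ht : t ∈ Set.Icc 0 T) : ContDiff ℝ 1 (S.u t) :=
  contDiff_slice S.smooth_u ht

theorem hasFDerivAt_ρ (ht : t ∈ Set.Icc 0 T) (x : EuclideanSpace ℝ (Fin n)) :
    HasFDerivAt (S.ρ t) (fderiv ℝ (S.ρ t) x) x :=
  ((S.contDiff_ρ ht).differentiable one_ne_zero x).hasFDerivAt

theorem hasFDerivAt_u (ht : t ∈ Set.Icc 0 T) (x : EuclideanSpace ℝ (Fin n)) :
    HasFDerivAt (S.u t) (fderiv ℝ (S.u t) x) x :=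
  ((S.contDiff_u ht).differentiable one_ne_zero x).hasFDerivAt

theorem hasDerivAt_ρ (ht : t ∈ Set.Ioo 0 T) (x : EuclideanSpace ℝ (Fin n)) :
    HasDerivAt (fun τ => S.ρ τ x) (deriv (fun τ => S.ρ τ x) t) t :=
  (hasDerivAt_slice S.smooth_ρ (Icc_mem_nhds ht.1 ht.2) x).differentiableAt.hasDerivAt

theorem hasDerivAt_u (ht : t ∈ Set.Ioo 0 T) (x : EuclideanSpace ℝ (Fin n)) :
    HasDerivAt (fun τ => S.u τ x) (deriv (fun τ => S.u τ x) t) t :=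
  (hasDerivAt_slice S.smooth_u (Icc_mem_nhds ht.1 ht.2) x).differentiableAt.hasDerivAt

theorem contDiffOn_pressure (hγ : 1 ≤ γ) :
    ContDiffOn ℝ 1 (fun p : ℝ × EuclideanSpace ℝ (Fin n) => S.ρ p.1 p.2 ^ γ)
      (Set.Icc 0 T ×ˢ Set.univ) :=
  ContDiffOn.rpow_const_of_le (m := 1) (by simpa using S.smooth_ρ) (by simpa using hγ)

theorem differentiable_pressure (hγ : 1 ≤ γ) (ht : t ∈ Set.Icc 0 T) :
    Differentiable ℝ fun x => S.ρ t x ^ γ :=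
  (contDiff_slice (q := fun t x => S.ρ t x ^ γ) (S.contDiffOn_pressure hγ) ht).differentiable
    one_ne_zero

theorem pressure_nonneg (ht : t ∈ Set.Icc 0 T) (x : EuclideanSpace ℝ (Fin n)) :
    0 ≤ S.ρ t x ^ γ :=
  Real.rpow_nonneg (S.ρ_nonneg t ht x) γ

theorem mass_conservationLaw : IsConservationLaw S.ρ (fun t x => S.ρ t x • S.u t x) T where
  contDiffOn_density := S.smooth_ρ
  contDiffOn_flux := S.smooth_ρ.smul S.smooth_u
  deriv_add_divergence t ht x := by
    have hIcc := Set.Ioo_subset_Icc_self ht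
    have hflux : DifferentiableAt ℝ (fun y => S.ρ t y • S.u t y) x :=
      ((S.contDiff_ρ hIcc).smul (S.contDiff_u hIcc)).differentiable one_ne_zero x
    rw [divergence_eq_sum_apply hflux]
    exact S.mass_eq t hIcc x

theorem deriv_ρ_add_fderiv_ρ_apply_u (ht : t ∈ Set.Ioo 0 T) (x : EuclideanSpace ℝ (Fin n)) :
    deriv (fun τ => S.ρ τ x) t + fderiv ℝ (S.ρ t) x (S.u t x)
      = -(S.ρ t x * divergence (S.u t) x) := by
  have hIcc := Set.Ioo_subset_Icc_self ht
  have hmass := S.mass_conservationLaw.deriv_add_divergence t ht x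
  rw [divergence_smul (S.hasFDerivAt_ρ hIcc x).differentiableAt
    (S.hasFDerivAt_u hIcc x).differentiableAt] at hmass
  linarith

/-- The flux of the `i`-th component of momentum: transport by `u`, plus the pressure acting in
the direction of the `i`-th axis. -/
def momentumFlux (i : Fin n) (t : ℝ) (x : EuclideanSpace ℝ (Fin n)) : EuclideanSpace ℝ (Fin n) :=
  S.u t x i • S.ρ t x • S.u t x + S.ρ t x ^ γ • EuclideanSpace.single i 1

theorem differentiable_momentum_transport (ht : t ∈ Set.Icc 0 T) (i : Fin n) :
    Differentiable ℝ fun x => S.u t x i • S.ρ t x • S.u t x :=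
  ((contDiff_euclidean.1 (S.contDiff_u ht) i).smul
    ((S.contDiff_ρ ht).smul (S.contDiff_u ht))).differentiable one_ne_zero

theorem divergence_momentumFlux (hγ : 1 ≤ γ) (ht : t ∈ Set.Icc 0 T) (i : Fin n)
    (x : EuclideanSpace ℝ (Fin n)) :
    divergence (S.momentumFlux i t) x = divergence (fun y => S.u t y i • S.ρ t y • S.u t y) x
      + fderiv ℝ (fun y => S.ρ t y ^ γ) x (EuclideanSpace.single i 1) := by
  have hp := S.differentiable_pressure hγ ht x
  rw [← divergence_smul_const hp, ← divergence_add (S.differentiable_momentum_transport ht i x)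
    (hp.smul_const _)]
  rfl

theorem momentum_conservationLaw (hγ : 1 ≤ γ) (i : Fin n) :
    IsConservationLaw (fun t x => S.ρ t x * S.u t x i) (S.momentumFlux i) T where
  contDiffOn_density := S.smooth_ρ.mul (contDiffOn_euclidean.1 S.smooth_u i)
  contDiffOn_flux := ((contDiffOn_euclidean.1 S.smooth_u i).smul
    (S.smooth_ρ.smul S.smooth_u)).add ((S.contDiffOn_pressure hγ).smul contDiffOn_const)
  deriv_add_divergence t ht x := by
    have hIcc := Set.Ioo_subset_Icc_self ht
    have hcomponent (j : Fin n) : (fun y => (S.u t y i • S.ρ t y • S.u t y) j)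
        = fun y => S.ρ t y * S.u t y i * S.u t y j := by
      ext y
      simp only [PiLp.smul_apply, smul_eq_mul]
      ring
    rw [S.divergence_momentumFlux hγ hIcc,
      divergence_eq_sum_apply (S.differentiable_momentum_transport hIcc i x), ← add_assoc]
    simpa only [hcomponent] using S.momentum_eq t hIcc x i

/-- The acceleration `∂ₜu + (u · ∇)u` of the fluid particle passing through `x` at time `t`. -/
def acceleration (t : ℝ) (x : EuclideanSpace ℝ (Fin n)) : EuclideanSpace ℝ (Fin n) :=
  deriv (fun τ => S.u τ x) t + fderiv ℝ (S.u t) x (S.u t x)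

theorem ρ_smul_acceleration (hγ : 1 ≤ γ) (ht : t ∈ Set.Ioo 0 T) (x : EuclideanSpace ℝ (Fin n)) :
    S.ρ t x • S.acceleration t x = -gradient (fun y => S.ρ t y ^ γ) x := by
  have hIcc := Set.Ioo_subset_Icc_self ht
  ext i
  let π : EuclideanSpace ℝ (Fin n) →L[ℝ] ℝ := EuclideanSpace.proj i
  have hut : HasDerivAt (fun τ => S.u τ x i) (deriv (fun τ => S.u τ x) t i) t :=
    π.hasFDerivAt.comp_hasDerivAt t (S.hasDerivAt_u ht x)
  have hux : HasFDerivAt (fun y => S.u t y i) (π ∘L fderiv ℝ (S.u t) x) x :=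
    π.hasFDerivAt.comp x (S.hasFDerivAt_u hIcc x)
  have hmaterial := S.mass_conservationLaw.deriv_mul_add_divergence_smul
    (f := fun τ y => S.u τ y i) ht hut.differentiableAt hux.differentiableAt
  rw [hut.deriv, hux.fderiv] at hmaterial
  have hmomentum := (S.momentum_conservationLaw hγ i).deriv_add_divergence t ht x
  rw [S.divergence_momentumFlux hγ hIcc, ← inner_gradient_left,
    EuclideanSpace.inner_single_right, one_mul, conj_trivial] at hmomentum
  have hπ : (π ∘L fderiv ℝ (S.u t) x) (S.ρ t x • S.u t x)
      = S.ρ t x * fderiv ℝ (S.u t) x (S.u t x) i := by simp [π]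
  simp only [acceleration, PiLp.smul_apply, PiLp.add_apply, PiLp.neg_apply, smul_eq_mul]
  linear_combination hmomentum - hmaterial - hπ

theorem kinetic_energy_balance (hγ : 1 ≤ γ) (ht : t ∈ Set.Ioo 0 T)
    (x : EuclideanSpace ℝ (Fin n)) :
    deriv (fun τ => S.ρ τ x * (1 / 2 * ‖S.u τ x‖ ^ 2)) t
      + divergence (fun y => (1 / 2 * ‖S.u t y‖ ^ 2) • S.ρ t y • S.u t y) x
      = -fderiv ℝ (fun y => S.ρ t y ^ γ) x (S.u t x) := by
  have hut := (hasFDerivAt_half_norm_sq (S.u t x)).comp_hasDerivAt t (S.hasDerivAt_u ht x)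
  have hux := (hasFDerivAt_half_norm_sq (S.u t x)).comp x
    (S.hasFDerivAt_u (Set.Ioo_subset_Icc_self ht) x)
  refine (S.mass_conservationLaw.deriv_mul_add_divergence_smul
    (f := fun τ y => 1 / 2 * ‖S.u τ y‖ ^ 2) ht hut.differentiableAt hux.differentiableAt).trans ?_
  calc _ = S.ρ t x * ⟪S.u t x, deriv (fun τ => S.u τ x) t⟫_ℝ
        + ⟪S.u t x, fderiv ℝ (S.u t) x (S.ρ t x • S.u t x)⟫_ℝ :=
        congrArg₂ _ (congrArg _ hut.deriv) (DFunLike.congr_fun hux.fderiv _)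
    _ = ⟪S.u t x, S.ρ t x • S.acceleration t x⟫_ℝ := by
        rw [acceleration, map_smul, inner_smul_right, inner_smul_right, inner_add_right, mul_add]
    _ = -fderiv ℝ (fun y => S.ρ t y ^ γ) x (S.u t x) := by
        rw [S.ρ_smul_acceleration hγ ht, inner_neg_right, real_inner_comm, inner_gradient_left]

theorem deriv_pressure_add_fderiv_pressure_apply_u (hγ : 1 ≤ γ) (ht : t ∈ Set.Ioo 0 T)
    (x : EuclideanSpace ℝ (Fin n)) :
    deriv (fun τ => S.ρ τ x ^ γ) t + fderiv ℝ (fun y => S.ρ t y ^ γ) x (S.u t x)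
      = -(γ * S.ρ t x ^ γ * divergence (S.u t) x) := by
  have hIcc := Set.Ioo_subset_Icc_self ht
  have hpow : S.ρ t x ^ γ = S.ρ t x ^ (γ - 1) * S.ρ t x := by
    rw [← Real.rpow_add_one' (S.ρ_nonneg t hIcc x) (by linarith), sub_add_cancel]
  rw [((S.hasDerivAt_ρ ht x).rpow_const (Or.inr hγ)).deriv,
    ((S.hasFDerivAt_ρ hIcc x).rpow_const (Or.inr hγ)).fderiv, smul_apply,
    smul_eq_mul, hpow]
  linear_combination γ * S.ρ t x ^ (γ - 1) * S.deriv_ρ_add_fderiv_ρ_apply_u ht x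

theorem internal_energy_balance (hγ : 1 < γ) (ht : t ∈ Set.Ioo 0 T)
    (x : EuclideanSpace ℝ (Fin n)) :
    deriv (fun τ => S.ρ τ x ^ γ / (γ - 1)) t
      + divergence (fun y => (γ / (γ - 1) * S.ρ t y ^ γ) • S.u t y) x
      = fderiv ℝ (fun y => S.ρ t y ^ γ) x (S.u t x) := by
  have hIcc := Set.Ioo_subset_Icc_self ht
  have hp := S.differentiable_pressure hγ.le hIcc x
  have hγ' : γ - 1 ≠ 0 := by linarith
  rw [deriv_div_const, divergence_smul (hp.const_mul _) (S.hasFDerivAt_u hIcc x).differentiableAt,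
    fderiv_const_mul hp, smul_apply, smul_eq_mul]
  linear_combination (norm := (field_simp; ring))
    (γ - 1)⁻¹ * S.deriv_pressure_add_fderiv_pressure_apply_u hγ.le ht x

/-- The total energy density, kinetic plus internal. -/
def energyDensity (t : ℝ) (x : EuclideanSpace ℝ (Fin n)) : ℝ :=
  1 / 2 * S.ρ t x * ‖S.u t x‖ ^ 2 + S.ρ t x ^ γ / (γ - 1)

/-- The flux of `energyDensity`: its transport by `u`, plus the work done by the pressure. -/
def energyFlux (t : ℝ) (x : EuclideanSpace ℝ (Fin n)) : EuclideanSpace ℝ (Fin n) :=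
  (1 / 2 * ‖S.u t x‖ ^ 2) • S.ρ t x • S.u t x + (γ / (γ - 1) * S.ρ t x ^ γ) • S.u t x

theorem energy_conservationLaw (hγ : 1 < γ) :
    IsConservationLaw S.energyDensity S.energyFlux T where
  contDiffOn_density := ((contDiffOn_const.mul S.smooth_ρ).mul (S.smooth_u.norm_sq ℝ)).add
    ((S.contDiffOn_pressure hγ.le).div_const _)
  contDiffOn_flux := ((contDiffOn_const.mul (S.smooth_u.norm_sq ℝ)).smul
    (S.smooth_ρ.smul S.smooth_u)).add
      ((contDiffOn_const.mul (S.contDiffOn_pressure hγ.le)).smul S.smooth_u)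
  deriv_add_divergence t ht x := by
    have hIcc := Set.Ioo_subset_Icc_self ht
    have hp := S.differentiable_pressure hγ.le hIcc x
    have hu := (S.hasFDerivAt_u hIcc x).differentiableAt
    have hρ := (S.hasFDerivAt_ρ hIcc x).differentiableAt
    have hdens (τ : ℝ) : S.energyDensity τ x
        = S.ρ τ x * (1 / 2 * ‖S.u τ x‖ ^ 2) + S.ρ τ x ^ γ / (γ - 1) := by
      rw [energyDensity]
      ring
    have hflux : divergence (S.energyFlux t) x
        = divergence (fun y => (1 / 2 * ‖S.u t y‖ ^ 2) • S.ρ t y • S.u t y) x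
          + divergence (fun y => (γ / (γ - 1) * S.ρ t y ^ γ) • S.u t y) x :=
      divergence_add (((hu.norm_sq ℝ).const_mul _).smul (hρ.smul hu)) ((hp.const_mul _).smul hu)
    have hkin : DifferentiableAt ℝ (fun τ => S.ρ τ x * (1 / 2 * ‖S.u τ x‖ ^ 2)) t :=
      (S.hasDerivAt_ρ ht x).differentiableAt.mul
        (((S.hasDerivAt_u ht x).differentiableAt.norm_sq ℝ).const_mul _)
    have hint : DifferentiableAt ℝ (fun τ => S.ρ τ x ^ γ / (γ - 1)) t :=
      ((S.hasDerivAt_ρ ht x).rpow_const (Or.inr hγ.le)).differentiableAt.div_const _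
    simp only [hdens]
    rw [deriv_fun_add hkin hint, hflux]
    linear_combination S.kinetic_energy_balance hγ.le ht x + S.internal_energy_balance hγ ht x

/-! ### Conserved quantities and the virial identity -/

theorem Ek_nonneg (ht : t ∈ Set.Icc 0 T) : 0 ≤ S.Ek t :=
  mul_nonneg (by norm_num)
    (integral_nonneg fun x => mul_nonneg (S.ρ_nonneg t ht x) (sq_nonneg _))

theorem I_nonneg (hγ : 1 ≤ γ) (ht : t ∈ Set.Icc 0 T) : 0 ≤ S.I t :=
  mul_nonneg (one_div_nonneg.2 (by linarith)) (integral_nonneg (S.pressure_nonneg ht))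

theorem integral_ρ_mul_norm_u_sq (t : ℝ) : ∫ x, S.ρ t x * ‖S.u t x‖ ^ 2 = 2 * S.Ek t := by
  rw [Ek]
  ring

theorem integral_pressure (hγ : γ ≠ 1) (t : ℝ) : ∫ x, S.ρ t x ^ γ = (γ - 1) * S.I t := by
  rw [I, one_div, mul_inv_cancel_left₀ (sub_ne_zero.2 hγ)]

theorem norm_ρ_smul_u (ht : t ∈ Set.Icc 0 T) (x : EuclideanSpace ℝ (Fin n)) :
    ‖S.ρ t x • S.u t x‖ = S.ρ t x * ‖S.u t x‖ := by
  rw [norm_smul, Real.norm_of_nonneg (S.ρ_nonneg t ht x)]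

theorem integrable_ρ_smul_u (ht : t ∈ Set.Icc 0 T) : Integrable fun x => S.ρ t x • S.u t x :=
  (S.int_ρu t ht).mono'
    ((S.contDiff_ρ ht).continuous.smul (S.contDiff_u ht).continuous).aestronglyMeasurable
    (ae_of_all _ fun x => (S.norm_ρ_smul_u ht x).le)

theorem M_eq (ht : t ∈ Set.Icc 0 T) : S.M t = S.M 0 :=
  S.mass_conservationLaw.integral_eq_integral_zero S.hM (fun _ => S.integrable_ρ_smul_u) ht

theorem exists_norm_u_le (ht : t ∈ Set.Icc 0 T) : ∃ K, ∀ x, ‖S.u t x‖ ≤ K := by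
  have hdecay := S.decay_u t ht
  rw [Metric.cobounded_eq_cocompact] at hdecay
  obtain ⟨s, hs, hsmall⟩ := mem_cocompact.1 (hdecay.eventually (gt_mem_nhds one_pos))
  obtain ⟨K, hK⟩ := hs.exists_bound_of_continuousOn (S.contDiff_u ht).continuous.continuousOn
  refine ⟨max K 1, fun x => ?_⟩
  by_cases hx : x ∈ s
  · exact (hK x hx).trans (le_max_left _ _)
  · exact (le_of_lt (hsmall hx)).trans (le_max_right _ _)

theorem integrable_energyFlux (ht : t ∈ Set.Icc 0 T) : Integrable (S.energyFlux t) := by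
  obtain ⟨K, hK⟩ := S.exists_norm_u_le ht
  have hcoeff : Integrable fun x =>
      1 / 2 * (S.ρ t x * ‖S.u t x‖ ^ 2) + γ / (γ - 1) * S.ρ t x ^ γ :=
    ((S.int_ρu2 t ht).const_mul _).add ((S.int_ργ t ht).const_mul _)
  refine (hcoeff.smul_bdd K (S.contDiff_u ht).continuous.aestronglyMeasurable
    (ae_of_all _ hK)).congr (ae_of_all _ fun x => ?_)
  simp only [Pi.smul_apply', energyFlux, smul_smul, ← add_smul]
  congr 1
  ring

theorem integral_energyDensity (ht : t ∈ Set.Icc 0 T) : ∫ x, S.energyDensity t x = S.IE t := by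
  simp only [energyDensity, IE, Ek, I, mul_assoc]
  rw [integral_add ((S.int_ρu2 t ht).const_mul _) ((S.int_ργ t ht).div_const _),
    integral_const_mul, integral_div]
  ring

theorem IE_eq (hγ : 1 < γ) (ht : t ∈ Set.Icc 0 T) : S.IE t = S.IE 0 := by
  rw [← S.integral_energyDensity ht, ← S.integral_energyDensity (zero_mem_Icc_of_mem ht)]
  exact (S.energy_conservationLaw hγ).integral_eq_integral_zero S.hIE
    (fun _ => S.integrable_energyFlux) ht

theorem norm_momentumFlux_le (ht : t ∈ Set.Icc 0 T) (i : Fin n)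
    (x : EuclideanSpace ℝ (Fin n)) :
    ‖S.momentumFlux i t x‖ ≤ S.ρ t x * ‖S.u t x‖ ^ 2 + S.ρ t x ^ γ := by
  have hρ := S.ρ_nonneg t ht x
  calc ‖S.momentumFlux i t x‖
      ≤ ‖S.u t x i‖ * (S.ρ t x * ‖S.u t x‖) + S.ρ t x ^ γ := by
        refine (norm_add_le _ _).trans_eq ?_
        rw [norm_smul, S.norm_ρ_smul_u ht, norm_smul, PiLp.norm_single, norm_one, mul_one,
          Real.norm_of_nonneg (S.pressure_nonneg ht x)]
    _ ≤ ‖S.u t x‖ * (S.ρ t x * ‖S.u t x‖) + S.ρ t x ^ γ := by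
        gcongr
        exact PiLp.norm_apply_le _ i
    _ = S.ρ t x * ‖S.u t x‖ ^ 2 + S.ρ t x ^ γ := by ring

theorem integrable_momentumFlux (hγ : 1 ≤ γ) (ht : t ∈ Set.Icc 0 T) (i : Fin n) :
    Integrable (S.momentumFlux i t) :=
  ((S.int_ρu2 t ht).add (S.int_ργ t ht)).mono'
    ((S.momentum_conservationLaw hγ i).contDiff_flux ht).continuous.aestronglyMeasurable
    (ae_of_all _ (S.norm_momentumFlux_le ht i))

theorem integral_norm_momentumFlux_le (hγ : 1 < γ) (ht : t ∈ Set.Icc 0 T) (i : Fin n) :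
    ∫ x, ‖S.momentumFlux i t x‖ ≤ (γ + 1) * S.IE 0 := by
  have hEk := mul_nonneg (sub_nonneg.2 hγ.le) (S.Ek_nonneg ht)
  have hI := S.I_nonneg hγ.le ht
  calc ∫ x, ‖S.momentumFlux i t x‖
      ≤ ∫ x, S.ρ t x * ‖S.u t x‖ ^ 2 + S.ρ t x ^ γ :=
        integral_mono (S.integrable_momentumFlux hγ.le ht i).norm
          ((S.int_ρu2 t ht).add (S.int_ργ t ht)) (S.norm_momentumFlux_le ht i)
    _ = 2 * S.Ek t + (γ - 1) * S.I t := by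
        rw [integral_add (S.int_ρu2 t ht) (S.int_ργ t ht), S.integral_ρ_mul_norm_u_sq,
          S.integral_pressure hγ.ne']
    _ ≤ (γ + 1) * S.IE t := by
        rw [IE]
        linarith
    _ = (γ + 1) * S.IE 0 := by rw [S.IE_eq hγ ht]

theorem P_apply (ht : t ∈ Set.Icc 0 T) (i : Fin n) : S.P t i = ∫ x, S.ρ t x * S.u t x i :=
  eval_integral_piLp (S.integrable_ρ_smul_u ht).eval_piLp i

theorem P_eq (hγ : 1 < γ) (ht : t ∈ Set.Icc 0 T) : S.P t = S.P 0 := by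
  ext i
  rw [S.P_apply ht, S.P_apply (zero_mem_Icc_of_mem ht)]
  exact (S.momentum_conservationLaw hγ.le i).integral_eq_integral_zero_of_bounded
    (fun τ hτ => (S.integrable_ρ_smul_u hτ).eval_piLp i)
    (fun τ hτ => S.integrable_momentumFlux hγ.le hτ i)
    (fun τ hτ => S.integral_norm_momentumFlux_le hγ hτ i) ht

theorem norm_P_sq_le (ht : t ∈ Set.Icc 0 T) : ‖S.P t‖ ^ 2 ≤ 2 * S.Ek t * S.M t := by
  have hnorm : ‖S.P t‖ ≤ ∫ x, S.ρ t x * ‖S.u t x‖ := by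
    simpa only [P, S.norm_ρ_smul_u ht] using
      norm_integral_le_integral_norm fun x => S.ρ t x • S.u t x
  calc ‖S.P t‖ ^ 2 ≤ (∫ x, S.ρ t x * ‖S.u t x‖) ^ 2 := by gcongr
    _ ≤ (∫ x, S.ρ t x) * ∫ x, S.ρ t x * ‖S.u t x‖ ^ 2 :=
        sq_integral_mul_le (S.ρ_nonneg t ht) (S.int_ρ t ht) (S.int_ρu t ht) (S.int_ρu2 t ht)
    _ = 2 * S.Ek t * S.M t := by rw [S.integral_ρ_mul_norm_u_sq, M, mul_comm]

theorem exists_G_le : ∃ K, ∀ t ∈ Set.Icc 0 T, S.G t ≤ K := by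
  obtain ⟨K, hK⟩ := (isCompact_Icc (a := (0 : ℝ)) (b := T)).exists_bound_of_continuousOn (f := S.G)
    fun t ht => (S.hG t ht).continuousAt.continuousWithinAt
  exact ⟨K, fun t ht => (le_abs_self _).trans (hK t ht)⟩

theorem integrable_norm_mul_norm_ρ_smul_u (ht : t ∈ Set.Icc 0 T) :
    Integrable fun x => ‖x‖ * ‖S.ρ t x • S.u t x‖ := by
  simpa only [S.norm_ρ_smul_u ht, mul_comm] using S.int_ρux t ht

theorem integral_norm_mul_norm_ρ_smul_u_le (ht : t ∈ Set.Icc 0 T) :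
    ∫ x, ‖x‖ * ‖S.ρ t x • S.u t x‖ ≤ S.Ek t + S.G t := by
  have hkin := (S.int_ρu2 t ht).const_mul (1 / 2)
  have hinertia := (S.int_ρx2 t ht).const_mul (1 / 2)
  calc ∫ x, ‖x‖ * ‖S.ρ t x • S.u t x‖
      ≤ ∫ x, 1 / 2 * (S.ρ t x * ‖S.u t x‖ ^ 2) + 1 / 2 * (S.ρ t x * ‖x‖ ^ 2) := by
        refine integral_mono (S.integrable_norm_mul_norm_ρ_smul_u ht) (hkin.add hinertia)
          fun x => ?_
        simp only [S.norm_ρ_smul_u ht]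
        linear_combination
          1 / 2 * mul_nonneg (S.ρ_nonneg t ht x) (sq_nonneg (‖S.u t x‖ - ‖x‖))
    _ = S.Ek t + S.G t := by
        rw [integral_add hkin hinertia, integral_const_mul, integral_const_mul]
        rfl

theorem isPrimitiveOn_G (hγ : 1 < γ) : IsPrimitiveOn S.G S.F T := by
  obtain ⟨K, hK⟩ := S.exists_G_le
  have hprim := S.mass_conservationLaw.isPrimitiveOn_integral_mul (μ := volume)
    IsWeight.half_norm_sq (K := S.IE 0 + K)
    (fun τ hτ => ((S.int_ρx2 τ hτ).const_mul (1 / 2)).congr (ae_of_all _ fun x => by ring))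
    (fun _ => S.integrable_norm_mul_norm_ρ_smul_u) fun τ hτ => ?_
  · refine hprim.congr (fun τ _ => ?_) fun τ _ => ?_
    · simp only [G, ← integral_const_mul]
      congr 1 with x
      ring
    · simp only [(hasFDerivAt_half_norm_sq _).fderiv, innerSL_apply_apply, inner_smul_right, F,
        real_inner_comm]
  · have hI := S.I_nonneg hγ.le hτ
    have hIE := S.IE_eq hγ hτ
    rw [IE] at hIE
    linarith [S.integral_norm_mul_norm_ρ_smul_u_le hτ, hK τ hτ]

/-- The second derivative of the momentum of inertia, in terms of the kinetic and potential
energies. -/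
def virial (t : ℝ) : ℝ :=
  2 * S.Ek t + n * (γ - 1) * S.I t

theorem integrable_apply_mul (ht : t ∈ Set.Icc 0 T) (i : Fin n) :
    Integrable fun x : EuclideanSpace ℝ (Fin n) => x i * (S.ρ t x * S.u t x i) := by
  have hρ := (S.contDiff_ρ ht).continuous
  have hu := (S.contDiff_u ht).continuous
  refine (S.integrable_norm_mul_norm_ρ_smul_u ht).mono' (by fun_prop) (ae_of_all _ fun x => ?_)
  rw [norm_mul]
  gcongr
  exacts [PiLp.norm_apply_le x i, PiLp.norm_apply_le (S.ρ t x • S.u t x) i]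

theorem F_eq_sum (ht : t ∈ Set.Icc 0 T) :
    S.F t = ∑ i, ∫ x : EuclideanSpace ℝ (Fin n), x i * (S.ρ t x * S.u t x i) := by
  rw [F, ← integral_finsetSum _ fun i _ => S.integrable_apply_mul ht i]
  congr 1 with x
  rw [PiLp.inner_apply, Finset.mul_sum]
  refine Finset.sum_congr rfl fun i _ => ?_
  rw [RCLike.inner_apply, conj_trivial]
  ring

theorem sum_momentumFlux_apply (t : ℝ) (x : EuclideanSpace ℝ (Fin n)) :
    ∑ i, S.momentumFlux i t x i = S.ρ t x * ‖S.u t x‖ ^ 2 + n * S.ρ t x ^ γ := by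
  have hdiag (i : Fin n) : S.momentumFlux i t x i = S.ρ t x * S.u t x i ^ 2 + S.ρ t x ^ γ := by
    simp only [momentumFlux, PiLp.add_apply, PiLp.smul_apply, PiLp.single_apply, if_true,
      smul_eq_mul]
    ring
  simp only [hdiag, Finset.sum_add_distrib, ← Finset.mul_sum, EuclideanSpace.real_norm_sq_eq,
    Finset.sum_const, Finset.card_univ, Fintype.card_fin, nsmul_eq_mul]

theorem sum_integral_momentumFlux_apply (hγ : 1 < γ) (ht : t ∈ Set.Icc 0 T) :
    ∑ i, ∫ x, S.momentumFlux i t x i = S.virial t := by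
  rw [← integral_finsetSum _ fun i _ => (S.integrable_momentumFlux hγ.le ht i).eval_piLp i]
  simp only [sum_momentumFlux_apply]
  rw [integral_add (S.int_ρu2 t ht) ((S.int_ργ t ht).const_mul _), integral_const_mul,
    S.integral_ρ_mul_norm_u_sq, S.integral_pressure hγ.ne', virial, mul_assoc]

theorem isPrimitiveOn_F (hγ : 1 < γ) : IsPrimitiveOn S.F S.virial T := by
  have hprim (i : Fin n) : IsPrimitiveOn
      (fun t => ∫ x : EuclideanSpace ℝ (Fin n), x i * (S.ρ t x * S.u t x i))
      (fun t => ∫ x, S.momentumFlux i t x i) T := by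
    let π : EuclideanSpace ℝ (Fin n) →L[ℝ] ℝ := EuclideanSpace.proj i
    have hbalance := (S.momentum_conservationLaw hγ.le i).isPrimitiveOn_integral_mul
      (μ := volume) (IsWeight.clm π) (K := ‖π‖ * ((γ + 1) * S.IE 0))
      (fun τ hτ => S.integrable_apply_mul hτ i)
      (fun τ hτ => (S.integrable_momentumFlux hγ.le hτ i).norm.const_mul _) fun τ hτ => by
        rw [integral_const_mul]
        gcongr
        exact S.integral_norm_momentumFlux_le hγ hτ i
    simpa only [π.fderiv, π, PiLp.proj_apply] using hbalance
  exact (IsPrimitiveOn.sum fun i (_ : i ∈ Finset.univ) => hprim i).congr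
    (fun τ hτ => (S.F_eq_sum hτ).symm) fun τ hτ => S.sum_integral_momentumFlux_apply hγ hτ

theorem norm_P_sq_div_le_virial (hγ : 1 < γ) (hM0 : 0 < S.M 0) (ht : t ∈ Set.Icc 0 T) :
    ‖S.P 0‖ ^ 2 / S.M 0 ≤ S.virial t := by
  have hI : 0 ≤ n * (γ - 1) * S.I t :=
    mul_nonneg (mul_nonneg n.cast_nonneg (sub_nonneg.2 hγ.le)) (S.I_nonneg hγ.le ht)
  calc ‖S.P 0‖ ^ 2 / S.M 0 ≤ 2 * S.Ek t := by
        rw [div_le_iff₀ hM0, ← S.P_eq hγ ht, ← S.M_eq ht]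
        exact S.norm_P_sq_le ht
    _ ≤ S.virial t := le_add_of_nonneg_right hI

theorem virial_le (hγ : 1 < γ) {c : ℝ} (hkin : 2 ≤ c) (hint : n * (γ - 1) ≤ c)
    (ht : t ∈ Set.Icc 0 T) : S.virial t ≤ c * S.IE 0 := by
  rw [virial, ← S.IE_eq hγ ht, IE, mul_add]
  gcongr
  exacts [S.Ek_nonneg ht, S.I_nonneg hγ.le ht]

theorem quadratic_le_G (hγ : 1 < γ) (hM0 : 0 < S.M 0) (ht : t ∈ Set.Icc 0 T) :
    ‖S.P 0‖ ^ 2 / (2 * S.M 0) * t ^ 2 + S.F 0 * t + S.G 0 ≤ S.G t := by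
  rw [mul_comm 2, ← div_div]
  exact (S.isPrimitiveOn_G hγ).quadratic_le_of_const_le (S.isPrimitiveOn_F hγ)
    (fun _ => S.norm_P_sq_div_le_virial hγ hM0) ht

theorem G_le_quadratic (hγ : 1 < γ) {c : ℝ} (hkin : 2 ≤ c) (hint : n * (γ - 1) ≤ c)
    (ht : t ∈ Set.Icc 0 T) : S.G t ≤ c / 2 * S.IE 0 * t ^ 2 + S.F 0 * t + S.G 0 := by
  rw [div_mul_eq_mul_div]
  exact (S.isPrimitiveOn_G hγ).le_quadratic_of_le_const (S.isPrimitiveOn_F hγ)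
    (fun _ => S.virial_le hγ hkin hint) ht

end IsentropicEulerSolution

/-- **Lemma 3.3, isentropic Euler case: two-sided bounds on the momentum of inertia.**
If `1 < γ ≤ 1 + 2/n` then
`(‖ℙ(0)‖²/(2M(0))) t² + F(0) t + G(0) ≤ G(t) ≤ IE(0) t² + F(0) t + G(0)`,
while if `γ > 1 + 2/n` then
`(‖ℙ(0)‖²/(2M(0))) t² + F(0) t + G(0) ≤ G(t) ≤ (n(γ−1)/2) IE(0) t² + F(0) t + G(0)`. -/
theorem IsentropicEulerSolution.inertia_two_sided_bounds
    {n : ℕ} {γ T : ℝ} (hn : 1 ≤ n) (hγ : 1 < γ) (hT : 0 < T)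
    (S : IsentropicEulerSolution n γ T)
    (hM0 : 0 < S.M 0) :
    (γ ≤ 1 + 2 / n →
      ∀ t ∈ Set.Icc 0 T,
        (‖S.P 0‖ ^ 2 / (2 * S.M 0)) * t ^ 2 + S.F 0 * t + S.G 0 ≤ S.G t ∧
        S.G t ≤ S.IE 0 * t ^ 2 + S.F 0 * t + S.G 0) ∧
    (1 + 2 / n < γ →
      ∀ t ∈ Set.Icc 0 T,
        (‖S.P 0‖ ^ 2 / (2 * S.M 0)) * t ^ 2 + S.F 0 * t + S.G 0 ≤ S.G t ∧
        S.G t ≤ (n * (γ - 1) / 2) * S.IE 0 * t ^ 2 + S.F 0 * t + S.G 0) := by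
  have hn' : (0 : ℝ) < n := by exact_mod_cast hn
  refine ⟨fun hle t ht => ⟨S.quadratic_le_G hγ hM0 ht, ?_⟩,
    fun hlt t ht => ⟨S.quadratic_le_G hγ hM0 ht, ?_⟩⟩
  · have hint : n * (γ - 1) ≤ 2 := (le_div_iff₀' hn').1 (sub_le_iff_le_add'.2 hle)
    simpa using S.G_le_quadratic hγ le_rfl hint ht
  · have hkin : 2 ≤ n * (γ - 1) := (div_le_iff₀' hn').1 (le_sub_iff_add_le'.2 hlt.le)
    exact S.G_le_quadratic hγ hkin le_rfl ht
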